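/- Let n ≥ 1, let N ≥ 3 be a natural number, and let γ ∈ GL(n, ℚ) be such that γ − 1 is not nilpotent. Suppose that for every prime p there exists x_p ∈ GL(n, ℚ_p) such that every entry of x_p⁻¹ γ x_p − 1 lies in p^{ν_p(N)} ℤ_p (where ν_p(N) is the exponent of p in N; for p not dividing N this means the entries lie in ℤ_p). Then there exists k with 0 ≤ k ≤ n−1 such that the coefficient a_k of X^k in the characteristic polynomial of γ − 1 is a nonzero rational number with |a_k| ≥ N^{n−k}. -/

import Mathlib

/-!
The coefficient of `X ^ k` in the characteristic polynomial of an `n × n` matrix is, up to sign,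
the sum of the principal minors of size `n - k`. If the entries have norm at most `r` for an
ultrametric norm, this coefficient therefore has norm at most `r ^ (n - k)`. Applied to the
conjugates `x_p⁻¹ (γ - 1) x_p`, this bounds the coefficients `a_k` of the characteristic polynomial
of `γ - 1` by `‖a_k‖_p ≤ ‖N ^ (n - k)‖_p` at every prime `p`, so `a_k` is an integral multiple of
`N ^ (n - k)`. Since `γ - 1` is not nilpotent, some `a_k` with `k < n` is nonzero, and a nonzero
multiple of `N ^ (n - k)` is at least as large as `N ^ (n - k)`.
-/

section Matrix

variable {ι R : Type*} [Fintype ι] [DecidableEq ι]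

section CommRing

variable [CommRing R]

theorem charpoly_inv_mul_mul_sub_one {x : Matrix ι ι R} (hx : IsUnit x) (A : Matrix ι ι R) :
    (x⁻¹ * A * x - 1).charpoly = (A - 1).charpoly := by
  have h_conj : x⁻¹ * A * x - 1 = x⁻¹ * (A - 1) * x := by
    rw [mul_sub, sub_mul, mul_one,
      Matrix.nonsing_inv_mul x ((Matrix.isUnit_iff_isUnit_det x).mp hx)]
  obtain ⟨u, rfl⟩ := hx
  rw [h_conj, Matrix.charpoly_units_conj']

theorem exists_charpoly_coeff_ne_zero_of_not_isNilpotent {A : Matrix ι ι R}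
    (hA : ¬ IsNilpotent A) : ∃ k < Fintype.card ι, A.charpoly.coeff k ≠ 0 := by
  have : Nontrivial R := by
    by_contra! h
    exact hA ⟨1, Subsingleton.elim _ _⟩
  contrapose! hA
  have h_charpoly : A.charpoly = Polynomial.X ^ Fintype.card ι := by
    rw [A.charpoly_monic.as_sum, A.charpoly_natDegree_eq_dim,
      Finset.sum_eq_zero fun k hk ↦ by rw [hA k (Finset.mem_range.mp hk), map_zero, zero_mul],
      add_zero]
  exact ⟨Fintype.card ι, by simpa [h_charpoly] using A.aeval_self_charpoly⟩

end CommRing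

section Ultrametric

variable [NormedCommRing R] [NormOneClass R] [IsUltrametricDist R] {A : Matrix ι ι R} {r : ℝ}

theorem norm_det_le_pow_card (hA : ∀ i j, ‖A i j‖ ≤ r) : ‖A.det‖ ≤ r ^ Fintype.card ι := by
  rw [Matrix.det_apply]
  refine IsUltrametricDist.norm_sum_le_of_forall_le_of_nonempty Finset.univ_nonempty fun σ _ ↦ ?_
  calc ‖Equiv.Perm.sign σ • ∏ i, A (σ i) i‖ = ‖∏ i, A (σ i) i‖ := by
        rcases Int.units_eq_one_or (Equiv.Perm.sign σ) with h | h <;> simp [h]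
    _ ≤ ∏ i, ‖A (σ i) i‖ := Finset.norm_prod_le _ _
    _ ≤ ∏ _i : ι, r := Finset.prod_le_prod (fun _ _ ↦ norm_nonneg _) fun i _ ↦ hA (σ i) i
    _ = r ^ Fintype.card ι := by simp

theorem norm_charpoly_coeff_le_pow (hA : ∀ i j, ‖A i j‖ ≤ r) {k : ℕ} (hk : k ≤ Fintype.card ι) :
    ‖A.charpoly.coeff k‖ ≤ r ^ (Fintype.card ι - k) := by
  have h_minors := A.charpoly_coeff_eq_sum_minors _ (Nat.sub_le (Fintype.card ι) k)
  rw [Nat.sub_sub_self hk] at h_minors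
  calc ‖A.charpoly.coeff k‖
      = ‖∑ s ∈ Finset.univ.powersetCard (Fintype.card ι - k),
          (A.submatrix (Subtype.val : s → ι) Subtype.val).det‖ := by
        rw [h_minors]
        rcases neg_one_pow_eq_or R (Fintype.card ι - k) with h | h <;> simp [h]
    _ ≤ r ^ (Fintype.card ι - k) :=
      IsUltrametricDist.norm_sum_le_of_forall_le_of_nonempty
        (Finset.powersetCard_nonempty.mpr (Nat.sub_le _ _)) fun s hs ↦ by
          have h_det := norm_det_le_pow_card (A := A.submatrix (Subtype.val : s → ι) Subtype.val)
            fun i j ↦ hA i j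
          rwa [Fintype.card_coe, (Finset.mem_powersetCard.mp hs).2] at h_det

end Ultrametric

end Matrix

section Padic

theorem den_eq_one_of_forall_padic_norm_le_one {q : ℚ}
    (hq : ∀ (p : ℕ) [Fact p.Prime], ‖(q : ℚ_[p])‖ ≤ 1) : q.den = 1 := by
  by_contra h_den
  obtain ⟨p, hp, hpq⟩ := Nat.exists_prime_and_dvd h_den
  have : Fact p.Prime := ⟨hp⟩
  exact Rat.padicValuation_le_one_iff.mp
    ((Padic.norm_rat_le_one_iff_padicValuation_le_one p).mp (hq p)) hpq

theorem abs_le_abs_of_forall_padic_norm_le {a b : ℚ} (ha : a ≠ 0)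
    (h : ∀ (p : ℕ) [Fact p.Prime], ‖(a : ℚ_[p])‖ ≤ ‖(b : ℚ_[p])‖) : |b| ≤ |a| := by
  obtain rfl | hb := eq_or_ne b 0
  · rw [abs_zero]
    exact abs_nonneg a
  have h_den : (a / b).den = 1 := den_eq_one_of_forall_padic_norm_le_one fun p _ ↦ by
    rw [Rat.cast_div, norm_div]
    exact div_le_one_of_le₀ (h p) (norm_nonneg _)
  have h_num : ((a / b).num : ℚ) = a / b := Rat.coe_int_num_of_den_eq_one h_den
  have h_one : (1 : ℚ) ≤ |((a / b).num : ℚ)| := by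
    exact_mod_cast Int.one_le_abs (Rat.num_ne_zero.mpr (div_ne_zero ha hb))
  rwa [h_num, abs_div, one_le_div (abs_pos.mpr hb)] at h_one

variable {p : ℕ} [Fact p.Prime]

theorem padic_norm_pow_padicValNat {N : ℕ} (hN : N ≠ 0) :
    ‖(p : ℚ_[p]) ^ padicValNat p N‖ = ‖(N : ℚ_[p])‖ := by
  rw [Padic.norm_eq_zpow_neg_valuation (Nat.cast_ne_zero.mpr hN), Padic.valuation_natCast,
    Padic.norm_p_pow]

theorem padic_norm_le_norm_natCast_iff {N : ℕ} (hN : N ≠ 0) {y : ℚ_[p]} :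
    ‖y‖ ≤ ‖(N : ℚ_[p])‖ ↔ ∃ z : ℤ_[p], y = (p : ℚ_[p]) ^ padicValNat p N * z := by
  have hp : (p : ℚ_[p]) ^ padicValNat p N ≠ 0 :=
    pow_ne_zero _ (Nat.cast_ne_zero.mpr (Fact.out : p.Prime).ne_zero)
  rw [← padic_norm_pow_padicValNat hN]
  constructor
  · intro hy
    refine ⟨⟨y / (p : ℚ_[p]) ^ padicValNat p N, ?_⟩, (mul_div_cancel₀ y hp).symm⟩
    rw [norm_div]
    exact div_le_one_of_le₀ hy (norm_nonneg _)
  · rintro ⟨z, rfl⟩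
    rw [norm_mul]
    exact mul_le_of_le_one_right (norm_nonneg _) z.norm_le_one

end Padic

theorem padic_norm_charpoly_coeff_le {ι : Type*} [Fintype ι] [DecidableEq ι] {p : ℕ} [Fact p.Prime]
    {γ : Matrix ι ι ℚ} {x : Matrix ι ι ℚ_[p]} (hx : IsUnit x) {r : ℝ}
    (h : ∀ i j, ‖(x⁻¹ * γ.map (Rat.cast : ℚ → ℚ_[p]) * x - 1) i j‖ ≤ r)
    {k : ℕ} (hk : k ≤ Fintype.card ι) :
    ‖((γ - 1).charpoly.coeff k : ℚ_[p])‖ ≤ r ^ (Fintype.card ι - k) := by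
  have h_map : γ.map (Rat.cast : ℚ → ℚ_[p]) - 1 = (γ - 1).map (Rat.castHom ℚ_[p]) := by
    rw [Matrix.map_sub _ (map_sub _), Matrix.map_one _ (map_zero _) (map_one _)]
    rfl
  have h_coeff := norm_charpoly_coeff_le_pow h hk
  rwa [charpoly_inv_mul_mul_sub_one hx, h_map, Matrix.charpoly_map,
    Polynomial.coeff_map] at h_coeff

theorem charpoly_coeff_large_of_conj_congruent_general {ι : Type*} [Fintype ι] [DecidableEq ι]
    (c : ℚ) (γ : Matrix ι ι ℚ) (hnil : ¬ IsNilpotent (γ - 1))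
    (h : ∀ (p : ℕ) [Fact p.Prime], ∃ x : Matrix ι ι ℚ_[p], IsUnit x ∧
      ∀ i j, ‖(x⁻¹ * γ.map (Rat.cast : ℚ → ℚ_[p]) * x - 1) i j‖ ≤ ‖(c : ℚ_[p])‖) :
    ∃ k < Fintype.card ι, (γ - 1).charpoly.coeff k ≠ 0 ∧
      |c| ^ (Fintype.card ι - k) ≤ |(γ - 1).charpoly.coeff k| := by
  obtain ⟨k, hk, hk_ne⟩ := exists_charpoly_coeff_ne_zero_of_not_isNilpotent hnil
  refine ⟨k, hk, hk_ne, ?_⟩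
  rw [← abs_pow]
  refine abs_le_abs_of_forall_padic_norm_le hk_ne fun p _ ↦ ?_
  obtain ⟨x, hx, h_entries⟩ := h p
  simpa using padic_norm_charpoly_coeff_le hx h_entries hk.le

/-- Let `γ ∈ GL(n, ℚ)` with `γ - 1` not nilpotent. If for every prime `p` there is
`x_p ∈ GL(n, ℚ_p)` such that every entry of `x_p⁻¹ γ x_p - 1` lies in `p^(ν_p N) ℤ_p`, then
some coefficient `a_k` (`0 ≤ k ≤ n-1`) of the characteristic polynomial of `γ - 1` is a
nonzero rational with `|a_k| ≥ N^(n-k)`. -/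
theorem charpoly_coeff_large_of_conj_congruent (n : ℕ) (hn : 1 ≤ n) (N : ℕ) (hN : 3 ≤ N)
    (γ : Matrix (Fin n) (Fin n) ℚ) (hγ : IsUnit γ)
    (hnil : ¬ IsNilpotent (γ - 1))
    (h : ∀ (p : ℕ) [Fact p.Prime],
      ∃ x : Matrix (Fin n) (Fin n) ℚ_[p], IsUnit x ∧
        ∀ i j, ∃ z : ℤ_[p],
          (x⁻¹ * γ.map (Rat.cast : ℚ → ℚ_[p]) * x - 1) i j
            = (p : ℚ_[p]) ^ padicValNat p N * (z : ℚ_[p])) :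
    ∃ k ≤ n - 1, (γ - 1).charpoly.coeff k ≠ 0 ∧
      (N : ℚ) ^ (n - k) ≤ |(γ - 1).charpoly.coeff k| := by
  simpa [Nat.lt_iff_le_pred hn] using charpoly_coeff_large_of_conj_congruent_general (N : ℚ) γ hnil
    (by simpa only [Rat.cast_natCast, padic_norm_le_norm_natCast_iff (by omega : N ≠ 0)] using h)
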